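/- There exists a 2-(24,4,1) packing with 42 blocks whose leave is a vertex-disjoint union of one cycle of length 4 and one cycle of length 20, covering all 24 points (leave type 4^1 20^1). -/

import Mathlib

/-!
The theorem is witnessed by an explicit packing. Write the points as `0, …, 3` (the 4-cycle) and
`4, …, 23` (the 20-cycle), and let `σ` be the permutation `x ↦ x + 1 (mod 4)` on the first part and
`4 + j ↦ 4 + (j + 5 mod 20)` on the second part. It has order 4 and preserves both cycles. The
packing is a union of twelve `σ`-orbits of blocks: nine orbits of size 4 and three of size 2. Each
non-edge of the two cycles lies in exactly one block and each edge in none; these finitely many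
facts are verified by kernel evaluation.
-/

/-- A 2-(24,4,1) packing: a collection of 4-element blocks on 24 points such that
every pair of distinct points lies in at most one block. -/
def IsPacking (B : Finset (Finset (Fin 24))) : Prop :=
  (∀ b ∈ B, b.card = 4) ∧
  ∀ p q : Fin 24, p ≠ q → ∀ b₁ ∈ B, ∀ b₂ ∈ B,
    p ∈ b₁ → q ∈ b₁ → p ∈ b₂ → q ∈ b₂ → b₁ = b₂

/-- Adjacency in the leave of a packing: the pair of distinct points is covered by no block. -/
def LeaveAdj (B : Finset (Finset (Fin 24))) (p q : Fin 24) : Prop :=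
  p ≠ q ∧ ∀ b ∈ B, ¬ (p ∈ b ∧ q ∈ b)

/-- The leave of the packing `B` is a vertex-disjoint union of cycles whose lengths are
given by the list `L`, covering all 24 points. -/
def LeaveIsCycleType (B : Finset (Finset (Fin 24))) (L : List ℕ) : Prop :=
  ∃ f : (i : Fin L.length) → ZMod (L.get i) → Fin 24,
    Function.Bijective (fun x : Σ i : Fin L.length, ZMod (L.get i) => f x.1 x.2) ∧
    ∀ p q : Fin 24, LeaveAdj B p q ↔
      ∃ i k, (p = f i k ∧ q = f i (k + 1)) ∨ (q = f i k ∧ p = f i (k + 1))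

/-- The 42 blocks as lists of points, one `σ`-orbit per line, where `σ` rotates `0, …, 3`
by one step and `4, …, 23` by five steps. Coverage of pairs is evaluated on this representation. -/
def blockPoints : List (List (Fin 24)) :=
  [[0, 2, 4, 14], [1, 3, 9, 19],
   [0, 5, 7, 9], [1, 10, 12, 14], [2, 15, 17, 19], [3, 4, 20, 22],
   [0, 6, 11, 19], [1, 4, 11, 16], [2, 9, 16, 21], [3, 6, 14, 21],
   [0, 8, 12, 15], [1, 13, 17, 20], [2, 5, 18, 22], [3, 7, 10, 23],
   [0, 10, 17, 22], [1, 7, 15, 22], [2, 7, 12, 20], [3, 5, 12, 17],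
   [0, 13, 18, 21], [1, 6, 18, 23], [2, 8, 11, 23], [3, 8, 13, 16],
   [0, 16, 20, 23], [1, 5, 8, 21], [2, 6, 10, 13], [3, 11, 15, 18],
   [4, 6, 8, 17], [9, 11, 13, 22], [7, 14, 16, 18], [12, 19, 21, 23],
   [4, 7, 13, 19], [4, 9, 12, 18], [9, 14, 17, 23], [8, 14, 19, 22],
   [4, 10, 15, 21], [6, 9, 15, 20], [5, 11, 14, 20], [5, 10, 16, 19],
   [5, 13, 15, 23], [8, 10, 18, 20],
   [6, 12, 16, 22], [7, 11, 17, 21]]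

/-- The 42 blocks as finite sets. -/
def blockList : List (Finset (Fin 24)) := blockPoints.map List.toFinset

/-- The packing: the set of blocks of `blockList`. -/
def packingBlocks : Finset (Finset (Fin 24)) := blockList.toFinset

theorem card_of_mem_blockList : ∀ b ∈ blockList, b.card = 4 := by
  have h : blockList.all (fun b => b.card == 4) = true := by decide +kernel
  simpa using h

theorem blockList_pairwise : blockList.Pairwise fun b₁ b₂ => (b₁ ∩ b₂).card ≤ 1 := by
  decide +kernel

/-- Equal entries of `blockList` would meet in four points. -/
theorem blockList_nodup : blockList.Nodup := by
  refine blockList_pairwise.imp_of_mem fun {b₁ b₂} h₁ _ h heq => ?_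
  subst heq
  rw [Finset.inter_self, card_of_mem_blockList b₁ h₁] at h
  omega

theorem card_packingBlocks : packingBlocks.card = 42 :=
  List.toFinset_card_of_nodup blockList_nodup

theorem isPacking_packingBlocks : IsPacking packingBlocks := by
  refine ⟨fun b hb => card_of_mem_blockList b (List.mem_toFinset.1 hb),
    fun p q hpq b₁ h₁ b₂ h₂ hp₁ hq₁ hp₂ hq₂ => ?_⟩
  by_contra hne
  have h : (b₁ ∩ b₂).card ≤ 1 :=
    have : Std.Symm fun b₁ b₂ : Finset (Fin 24) => (b₁ ∩ b₂).card ≤ 1 :=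
      ⟨fun b₁ b₂ h => by rwa [Finset.inter_comm]⟩
    blockList_pairwise.forall (List.mem_toFinset.1 h₁) (List.mem_toFinset.1 h₂) hne
  exact hpq (Finset.card_le_one.1 h p (Finset.mem_inter.2 ⟨hp₁, hp₂⟩) q
    (Finset.mem_inter.2 ⟨hq₁, hq₂⟩))

/-- The 4-cycle of the leave, through `0, …, 3`. -/
def shortCycle (k : Fin 4) : Fin 24 := Fin.castAdd 20 k

/-- The 20-cycle of the leave, through `4, …, 23`. -/
def longCycle (k : Fin 20) : Fin 24 := Fin.natAdd 4 k

/-- The two cycles as one family. The index types `ZMod 4` and `ZMod 20` are definitionally `Fin 4`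
and `Fin 20`. -/
def leaveCycles : (i : Fin [4, 20].length) → ZMod ([4, 20].get i) → Fin 24
  | ⟨0, _⟩ => shortCycle
  | ⟨1, _⟩ => longCycle

theorem leaveCycles_bijective :
    Function.Bijective
      (fun x : Σ i : Fin [4, 20].length, ZMod ([4, 20].get i) => leaveCycles x.1 x.2) := by
  have disjoint : ∀ k l, shortCycle k ≠ longCycle l := by decide +kernel
  constructor
  · rintro ⟨i, k⟩ ⟨j, l⟩ h
    match i, j, k, l, h with
    | ⟨0, _⟩, ⟨0, _⟩, k, l, h =>
      have : k = l := Fin.castAdd_injective 4 20 h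
      rw [this]
    | ⟨0, _⟩, ⟨1, _⟩, k, l, h => exact absurd h (disjoint k l)
    | ⟨1, _⟩, ⟨0, _⟩, k, l, h => exact absurd h.symm (disjoint l k)
    | ⟨1, _⟩, ⟨1, _⟩, k, l, h =>
      have : k = l := Fin.natAdd_injective 20 4 h
      rw [this]
  · intro p
    have cover : ∀ p, (∃ k, shortCycle k = p) ∨ ∃ k, longCycle k = p := by decide +kernel
    rcases cover p with ⟨k, h⟩ | ⟨k, h⟩
    · exact ⟨⟨0, k⟩, h⟩
    · exact ⟨⟨1, k⟩, h⟩

theorem shortCycle_uncovered :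
    ∀ k, ∀ b ∈ blockPoints, ¬ (shortCycle k ∈ b ∧ shortCycle (k + 1) ∈ b) := by
  decide +kernel

theorem longCycle_uncovered :
    ∀ k, ∀ b ∈ blockPoints, ¬ (longCycle k ∈ b ∧ longCycle (k + 1) ∈ b) := by
  decide +kernel

/-- `p` and `q` are neighbours on one of the two cycles. The indices range over `Fin 4` and `Fin 20`
separately, which makes the predicate decidable by evaluation. -/
abbrev Consecutive (p q : Fin 24) : Prop :=
  (∃ k, (p = shortCycle k ∧ q = shortCycle (k + 1)) ∨
    (q = shortCycle k ∧ p = shortCycle (k + 1))) ∨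
  ∃ k, (p = longCycle k ∧ q = longCycle (k + 1)) ∨
    (q = longCycle k ∧ p = longCycle (k + 1))

theorem covered_or_consecutive : ∀ p q : Fin 24,
    p = q ∨ (∃ b ∈ blockPoints, p ∈ b ∧ q ∈ b) ∨ Consecutive p q := by
  decide +kernel

theorem shortCycle_ne_succ : ∀ k, shortCycle k ≠ shortCycle (k + 1) := by
  decide +kernel

theorem longCycle_ne_succ : ∀ k, longCycle k ≠ longCycle (k + 1) := by
  decide +kernel

theorem leaveAdj_packingBlocks (p q : Fin 24) :
    LeaveAdj packingBlocks p q ↔ Consecutive p q := by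
  simp only [LeaveAdj, packingBlocks, blockList, List.mem_toFinset, List.forall_mem_map]
  constructor
  · rintro ⟨hne, h⟩
    rcases covered_or_consecutive p q with hpq | ⟨b, hb, hpq⟩ | hc
    · exact absurd hpq hne
    · exact absurd hpq (h b hb)
    · exact hc
  · rintro (⟨k, ⟨rfl, rfl⟩ | ⟨rfl, rfl⟩⟩ | ⟨k, ⟨rfl, rfl⟩ | ⟨rfl, rfl⟩⟩)
    · exact ⟨shortCycle_ne_succ k, shortCycle_uncovered k⟩
    · exact ⟨(shortCycle_ne_succ k).symm, fun b hb h => shortCycle_uncovered k b hb h.symm⟩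
    · exact ⟨longCycle_ne_succ k, longCycle_uncovered k⟩
    · exact ⟨(longCycle_ne_succ k).symm, fun b hb h => longCycle_uncovered k b hb h.symm⟩

theorem leaveIsCycleType_packingBlocks : LeaveIsCycleType packingBlocks [4, 20] := by
  refine ⟨leaveCycles, leaveCycles_bijective, fun p q => ?_⟩
  refine (leaveAdj_packingBlocks p q).trans ⟨?_, ?_⟩
  · rintro (⟨k, h⟩ | ⟨k, h⟩)
    · exact ⟨0, k, h⟩
    · exact ⟨1, k, h⟩
  · rintro ⟨i, k, h⟩
    match i, k, h with
    | ⟨0, _⟩, k, h => exact Or.inl ⟨k, h⟩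
    | ⟨1, _⟩, k, h => exact Or.inr ⟨k, h⟩

/-- There is a 2-(24,4,1) packing with 42 blocks whose leave is a vertex-disjoint
union of cycles of lengths [4, 20], covering all 24 points. -/
theorem exists_max_packing_with_leave_type :
    ∃ B : Finset (Finset (Fin 24)), IsPacking B ∧ B.card = 42 ∧
      LeaveIsCycleType B [4, 20] :=
  ⟨packingBlocks, isPacking_packingBlocks, card_packingBlocks, leaveIsCycleType_packingBlocks⟩
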